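/- The map 𝔽₃[T₁,T₂,T₃] × 𝔽₃[T₁,T₂,T₃] → S sending (p,q) to p(a₁,a₂,a₃) + q(a₁,a₂,a₃)·b is injective and its image is exactly the invariant ring S^G. Equivalently, S^G is a free module of rank 2 over the subalgebra A = 𝔽₃[a₁,a₂,a₃] with basis {1, b}. -/

import Mathlib

open Matrix MvPolynomial

set_option synthInstance.maxHeartbeats 1000000
set_option maxHeartbeats 1000000

abbrev F3 : Type := ZMod 3
abbrev G3 : Type := Matrix.SpecialLinearGroup (Fin 2) F3
abbrev S3 : Type := MvPolynomial (Fin 3) F3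

/-- The fixed basis `v₁, v₂, v₃` of the traceless `2 × 2` matrices over `𝔽₃`. -/
def V : Fin 3 → Matrix (Fin 2) (Fin 2) F3 :=
  ![!![0, 1; -1, 0], !![-1, -1; -1, 1], !![1, -1; -1, -1]]

/-- Coordinates of a traceless matrix with respect to the basis `v₁, v₂, v₃`. -/
def coordM : Fin 3 → Matrix (Fin 2) (Fin 2) F3 → F3 :=
  ![fun X => X 1 0 - X 0 1, fun X => X 0 0 - X 0 1 - X 1 0, fun X => -(X 0 0 + X 0 1 + X 1 0)]

/-- Matrix of the (dual) action of `g` on `M*`: `g • x_s = ∑ r, (rep g) s r • x_r`, where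
`(rep g) s r = x_s (g⁻¹ • v_r) = coordM s (g⁻¹ vᵣ g)`, coming from `(g • f)(v) = f(g⁻¹ • v)`. -/
def rep (g : G3) : Matrix (Fin 3) (Fin 3) F3 :=
  Matrix.of fun s r => coordM s ((g⁻¹ : G3) * V r * (g : Matrix (Fin 2) (Fin 2) F3))

/-- The action of `g ∈ SL₂(𝔽₃)` on `S = 𝔽₃[x₁,x₂,x₃]` by algebra automorphisms, given by
substituting `x_s ↦ g • x_s = ∑ r, (rep g) s r • x_r`. -/
noncomputable def actS (g : G3) : S3 →ₐ[F3] S3 :=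
  MvPolynomial.aeval fun s => ∑ r : Fin 3, rep g s r • MvPolynomial.X r

noncomputable def a1 : S3 := X 0 ^ 2 + X 1 ^ 2 + X 2 ^ 2
noncomputable def a2 : S3 := X 0 * X 1 * X 2
noncomputable def a3 : S3 := X 0 ^ 4 + X 1 ^ 4 + X 2 ^ 4
noncomputable def bP : S3 := X 0 ^ 4 * X 1 ^ 2 + X 0 ^ 2 * X 2 ^ 4 + X 1 ^ 4 * X 2 ^ 2
noncomputable def av : Fin 3 → S3 := ![a1, a2, a3]

/-- `Φ(p, q) = p(a₁,a₂,a₃) + q(a₁,a₂,a₃) · b`. -/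
noncomputable def Phi2 (pq : MvPolynomial (Fin 3) F3 × MvPolynomial (Fin 3) F3) : S3 :=
  aeval av pq.1 + aeval av pq.2 * bP

/-- Two algebra maps that agree modulo `d` on the variables agree modulo `d`. -/
lemma dvd_algHom_sub {σ R A : Type*} [CommRing R] [CommRing A] [Algebra R A]
    (φ ψ : MvPolynomial σ R →ₐ[R] A) (d : A) (h : ∀ i, d ∣ φ (X i) - ψ (X i))
    (f : MvPolynomial σ R) : d ∣ φ f - ψ f := by
  have key : (Ideal.Quotient.mkₐ R (Ideal.span {d})).comp φ =
      (Ideal.Quotient.mkₐ R (Ideal.span {d})).comp ψ := by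
    ext i
    simpa [Ideal.Quotient.eq, Ideal.mem_span_singleton] using h i
  have := DFunLike.congr_fun key f
  simpa [Ideal.Quotient.eq, Ideal.mem_span_singleton] using this

/-- An element that is killed by an endomorphism congruent to the identity modulo it is prime. -/
lemma prime_of_algHom {σ R : Type*} [CommRing R] [IsDomain R]
    (φ : MvPolynomial σ R →ₐ[R] MvPolynomial σ R) (d : MvPolynomial σ R) (hd : d ≠ 0)
    (hφ : φ d = 0) (h : ∀ i, d ∣ X i - φ (X i)) : Prime d := by
  have key : ∀ f, d ∣ f ↔ φ f = 0 := by
    intro f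
    refine ⟨?_, fun hf => ?_⟩
    · rintro ⟨g, rfl⟩
      simp [hφ]
    · simpa [hf] using dvd_algHom_sub (AlgHom.id R _) φ d (by simpa using h) f
  refine ⟨hd, fun hu => ?_, fun a b hab => ?_⟩
  · have := (key 1).1 hu.dvd
    simp at this
  · simpa [key] using hab

lemma mul_dvd_of_prime {R : Type*} [CommRing R] [IsDomain R] {d e f : R} (hd : Prime d)
    (hde : ¬ d ∣ e) (he : e ∣ f) (hf : d ∣ f) : e * d ∣ f := by
  obtain ⟨k, rfl⟩ := he
  exact mul_dvd_mul_left e ((hd.dvd_or_dvd hf).resolve_left hde)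

lemma not_dvd_of_eval {σ R : Type*} [CommRing R] {d e : MvPolynomial σ R} (v : σ → R)
    (hd : eval v d = 0) (he : eval v e ≠ 0) : ¬ d ∣ e := by
  rintro ⟨k, rfl⟩
  simp [hd] at he

/-- The algebra automorphism changing the sign of the variable `x_i`. -/
noncomputable def signChange (i : Fin 3) : S3 →ₐ[F3] S3 :=
  aeval fun j => if j = i then -X j else X j

lemma signChange_X (i j : Fin 3) :
    signChange i (X j) = if j = i then -X j else X j := by
  simp [signChange]

lemma signChange_signChange (i : Fin 3) (f : S3) : signChange i (signChange i f) = f := by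
  have : (signChange i).comp (signChange i) = AlgHom.id F3 S3 := by
    ext1 j
    by_cases h : j = i <;> simp [signChange_X, h]
  exact DFunLike.congr_fun this f

lemma rename_signChange (π : Equiv.Perm (Fin 3)) (i : Fin 3) (f : S3) :
    rename π (signChange i f) = signChange (π i) (rename π f) := by
  have : (rename π).comp (signChange i) = (signChange (π i)).comp (rename π) := by
    ext1 j
    by_cases h : j = i <;> simp [signChange_X, h]
  exact DFunLike.congr_fun this f

lemma coeff_signChange (i : Fin 3) (f : S3) (m : Fin 3 →₀ ℕ) :
    coeff m (signChange i f) = (-1) ^ m i * coeff m f := by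
  induction f using MvPolynomial.induction_on' with
  | add p q hp hq => simp [hp, hq, mul_add]
  | monomial n c =>
    have : signChange i (monomial n c) = monomial n ((-1) ^ n i * c) := by
      rw [signChange, aeval_monomial, Finsupp.prod_fintype _ _ (by simp), monomial_eq,
        Finsupp.prod_fintype _ _ (by simp)]
      have : ∀ j : Fin 3, (if j = i then -X j else X j : S3) ^ n j =
          (if j = i then C ((-1) ^ n j) else 1) * X j ^ n j := by
        intro j
        split_ifs
        · rw [neg_pow]; simp
        · simp
      simp only [this, Finset.prod_mul_distrib, Finset.prod_ite_eq', Finset.mem_univ, if_true,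
        algebraMap_eq, C_mul]
      ring
    rw [this, coeff_monomial, coeff_monomial]
    split_ifs with h
    · rw [h]
    · simp

/-- A polynomial invariant under all sign changes is a polynomial in the squares `x_i ^ 2`. -/
lemma exists_expand_of_signChange {f : S3} (hf : ∀ i, signChange i f = f) :
    ∃ g, expand 2 g = f := by
  rw [← AlgHom.mem_range, f.as_sum]
  refine sum_mem fun m hm => ?_
  have even : ∀ i, Even (m i) := by
    intro i
    by_contra h
    have h1 := coeff_signChange i f m
    rw [hf, (Nat.not_even_iff_odd.1 h).neg_one_pow] at h1
    rw [mem_support_iff] at hm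
    revert hm h1
    generalize coeff m f = c
    decide +revert
  choose n hn using even
  refine ⟨monomial (Finsupp.equivFunOnFinite.symm n) (coeff m f), ?_⟩
  change expand 2 (monomial _ _) = _
  rw [expand_monomial]
  have : 2 • Finsupp.equivFunOnFinite.symm n = m := by
    ext i
    simp [hn i, two_mul]
  rw [this]

lemma a1_mem : a1 ∈ (aeval av : S3 →ₐ[F3] S3).range := ⟨X 0, by simp [av]⟩
lemma a2_mem : a2 ∈ (aeval av : S3 →ₐ[F3] S3).range := ⟨X 1, by simp [av]⟩
lemma a3_mem : a3 ∈ (aeval av : S3 →ₐ[F3] S3).range := ⟨X 2, by simp [av]⟩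

lemma three_eq_zero : (3 : S3) = 0 := by
  have := CharP.cast_eq_zero S3 3
  exact_mod_cast this

/-- The second elementary symmetric function of the squares. -/
lemma e2_mem : X 0 ^ 2 * X 1 ^ 2 + X 0 ^ 2 * X 2 ^ 2 + X 1 ^ 2 * X 2 ^ 2 ∈
    (aeval av : S3 →ₐ[F3] S3).range := by
  have : X 0 ^ 2 * X 1 ^ 2 + X 0 ^ 2 * X 2 ^ 2 + X 1 ^ 2 * X 2 ^ 2 = a3 - a1 ^ 2 := by
    unfold a1 a3
    linear_combination (X 0 ^ 2 * X 1 ^ 2 + X 0 ^ 2 * X 2 ^ 2 + X 1 ^ 2 * X 2 ^ 2) * three_eq_zero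
  rw [this]
  exact sub_mem a3_mem (pow_mem a1_mem 2)

lemma expand_esymm_mem (i : Fin 3) :
    expand 2 (esymm (Fin 3) F3 (i + 1)) ∈ (aeval av : S3 →ₐ[F3] S3).range := by
  fin_cases i
  · convert a1_mem using 1
    simp [esymm_one, a1, Fin.sum_univ_three]
  · convert e2_mem using 1
    have : (Finset.univ : Finset (Fin 3)).powersetCard 2 = {{0, 1}, {0, 2}, {1, 2}} := by decide
    simp only [esymm]
    simp only [Nat.reduceAdd, this]
    rw [Finset.sum_insert (by decide), Finset.sum_insert (by decide), Finset.sum_singleton,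
      Finset.prod_pair (by decide), Finset.prod_pair (by decide), Finset.prod_pair (by decide)]
    simp [add_assoc]
  · convert pow_mem a2_mem 2 using 1
    have : (Finset.univ : Finset (Fin 3)).powersetCard 3 = {Finset.univ} := by decide
    simp only [esymm]
    simp [this, Fin.prod_univ_three, a2, mul_pow]

/-- A symmetric polynomial in the squares lies in `A`. -/
lemma mem_range_of_even_symmetric {f : S3} (hs : ∀ i, signChange i f = f)
    (hp : ∀ π : Equiv.Perm (Fin 3), rename π f = f) :
    f ∈ (aeval av : S3 →ₐ[F3] S3).range := by
  obtain ⟨g, rfl⟩ := exists_expand_of_signChange hs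
  have hg : g.IsSymmetric := fun π => expand_injective two_pos (by rw [← rename_expand, hp])
  obtain ⟨q, hq⟩ := esymmAlgHom_surjective (σ := Fin 3) F3 (n := 3) (by simp) ⟨g, hg⟩
  have hq' : aeval (fun i : Fin 3 => esymm (Fin 3) F3 (i + 1)) q = g := by
    rw [← esymmAlgHom_apply, hq]
  let e (i : Fin 3) : (aeval av : S3 →ₐ[F3] S3).range := ⟨_, expand_esymm_mem i⟩
  have he : expand 2 (aeval (fun i : Fin 3 => esymm (Fin 3) F3 (i + 1)) q) = aeval e q := by
    rw [← Subalgebra.coe_val, ← AlgHom.comp_apply, ← AlgHom.comp_apply, comp_aeval, comp_aeval]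
    rfl
  rw [← hq', he]
  exact (aeval e q).2

lemma a2_ne_zero : a2 ≠ 0 := by
  unfold a2
  simp

lemma rename_a2 (π : Equiv.Perm (Fin 3)) : rename π a2 = a2 := by
  have h : a2 = ∏ i : Fin 3, X i := by rw [Fin.prod_univ_three, a2]
  simp only [h, map_prod, rename_X]
  exact Equiv.prod_comp π _

lemma signChange_a2 (i : Fin 3) : signChange i a2 = -a2 := by
  fin_cases i <;> simp [a2, signChange_X]

/-- Polynomials invariant under all permutations and all even sign changes lie in `A`. -/
lemma mem_range_of_symmetric {f : S3} (hs : ∀ i j, signChange i f = signChange j f)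
    (hp : ∀ π : Equiv.Perm (Fin 3), rename π f = f) :
    f ∈ (aeval av : S3 →ₐ[F3] S3).range := by
  have hss : ∀ i j, signChange i (signChange j f) = f := fun i j => by
    rw [hs j i, signChange_signChange]
  have hsum : f + signChange 0 f ∈ (aeval av : S3 →ₐ[F3] S3).range := by
    apply mem_range_of_even_symmetric
    · intro i
      rw [map_add, hss, hs i 0, add_comm]
    · intro π
      rw [map_add, rename_signChange, hp, hs _ 0]
  have hX : ∀ i, X i ∣ f - signChange 0 f := by
    intro i
    rw [hs 0 i]
    refine dvd_algHom_sub (AlgHom.id F3 S3) _ _ (fun j => ?_) f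
    by_cases h : j = i
    · simp [signChange_X, h, ← two_mul]
    · simp [signChange_X, h]
  obtain ⟨k, hk⟩ : a2 ∣ f - signChange 0 f := by
    refine mul_dvd_of_prime (X_prime) ?_ (mul_dvd_of_prime X_prime ?_ (hX 0) (hX 1)) (hX 2)
    · exact not_dvd_of_eval ![1, 1, 0] (by simp) (by simp)
    · exact not_dvd_of_eval ![1, 0, 0] (by simp) (by simp)
  have hkA : k ∈ (aeval av : S3 →ₐ[F3] S3).range := by
    apply mem_range_of_even_symmetric
    · intro i
      apply mul_left_cancel₀ a2_ne_zero
      have := congrArg (signChange i) hk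
      rw [map_sub, hss, map_mul, signChange_a2, hs i 0] at this
      linear_combination hk + this
    · intro π
      apply mul_left_cancel₀ a2_ne_zero
      have := congrArg (rename π) hk
      rw [map_sub, rename_signChange, hp, map_mul, rename_a2, hs _ 0] at this
      rw [← this, hk]
  have : f = -((f + signChange 0 f) + a2 * k) := by
    rw [← hk]
    linear_combination f * three_eq_zero
  rw [this]
  exact neg_mem (add_mem hsum (mul_mem a2_mem hkA))

lemma prime_X_sub_C_mul_X {i j : Fin 3} (hij : i ≠ j) (c : F3) :
    Prime (X i - C c * X j : S3) := by
  refine prime_of_algHom (aeval fun k => if k = i then C c * X j else X k) _ (fun h => ?_) ?_ ?_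
  · simpa [hij] using congrArg (eval (Pi.single i 1)) h
  · simp [hij.symm]
  · intro k
    by_cases h : k = i <;> simp [h]

lemma prime_X_sub_X {i j : Fin 3} (hij : i ≠ j) : Prime (X i - X j : S3) := by
  simpa using prime_X_sub_C_mul_X hij 1

lemma prime_X_add_X {i j : Fin 3} (hij : i ≠ j) : Prime (X i + X j : S3) := by
  simpa using prime_X_sub_C_mul_X hij (-1)

lemma rename_finRotate_bP : rename (finRotate 3) bP = bP := by
  simp only [bP, map_add, map_mul, map_pow, rename_X]
  simp
  ring

lemma signChange_bP (i : Fin 3) : signChange i bP = bP := by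
  fin_cases i <;> simp [bP, signChange_X] <;> ring

lemma bP_sub_rename_swap : bP - rename (Equiv.swap (0 : Fin 3) 1) bP =
    -((X 0 - X 1) * (X 0 + X 1) * (X 1 - X 2) * (X 1 + X 2) * (X 2 - X 0) * (X 2 + X 0)) := by
  have h : Equiv.swap (0 : Fin 3) 1 2 = 2 := by decide
  simp only [bP, map_add, map_mul, map_pow, rename_X, Equiv.swap_apply_left,
    Equiv.swap_apply_right, h]
  ring

lemma bP_sub_rename_swap_ne_zero : bP - rename (Equiv.swap (0 : Fin 3) 1) bP ≠ 0 := by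
  rw [bP_sub_rename_swap]
  have h (i j : Fin 3) (hij : i ≠ j) := (prime_X_sub_X hij).ne_zero
  have h' (i j : Fin 3) (hij : i ≠ j) := (prime_X_add_X hij).ne_zero
  simp [h, h']

/-- The rotation and a transposition generate all permutations of three variables. -/
lemma rename_eq_of_generators {f : S3} (hc : rename (finRotate 3) f = f)
    (hσ : rename (Equiv.swap (0 : Fin 3) 1) f = f) (π : Equiv.Perm (Fin 3)) :
    rename π f = f := by
  have mul : ∀ π ρ : Equiv.Perm (Fin 3), rename π f = f → rename ρ f = f →
      rename (π * ρ) f = f := fun π ρ h h' => by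
    rw [Equiv.Perm.coe_mul, ← rename_rename, h', h]
  have one : rename (1 : Equiv.Perm (Fin 3)) f = f := by simp
  have key : ∀ π : Equiv.Perm (Fin 3), ∃ ρ ∈ [1, finRotate 3, finRotate 3 * finRotate 3],
      π = ρ ∨ π = ρ * Equiv.swap (0 : Fin 3) 1 := by decide
  obtain ⟨ρ, hρ, h⟩ := key π
  have hρf : rename ρ f = f := by
    simp only [List.mem_cons, List.not_mem_nil, or_false] at hρ
    rcases hρ with rfl | rfl | rfl
    exacts [one, hc, mul _ _ hc hc]
  rcases h with rfl | rfl
  exacts [hρf, mul _ _ hρf hσ]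

lemma rename_finRotate_sub_swap {f : S3} (hc : rename (finRotate 3) f = f) :
    rename (finRotate 3) (f - rename (Equiv.swap (0 : Fin 3) 1) f) =
      f - rename (Equiv.swap (0 : Fin 3) 1) f := by
  have h : finRotate 3 ∘ Equiv.swap (0 : Fin 3) 1 =
      Equiv.swap (0 : Fin 3) 1 ∘ finRotate 3 ∘ finRotate 3 := by decide
  rw [map_sub, hc, rename_rename, h, ← rename_rename, ← rename_rename, hc, hc]

lemma bP_sub_rename_swap_dvd {f : S3} (hs : ∀ i j, signChange i f = signChange j f)
    (hc : rename (finRotate 3) f = f) :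
    bP - rename (Equiv.swap (0 : Fin 3) 1) bP ∣ f - rename (Equiv.swap (0 : Fin 3) 1) f := by
  have h2 : Equiv.swap (0 : Fin 3) 1 2 = 2 := by decide
  have hrot : ∀ d : S3, d ∣ f - rename (Equiv.swap (0 : Fin 3) 1) f →
      rename (finRotate 3) d ∣ f - rename (Equiv.swap (0 : Fin 3) 1) f := fun d hd => by
    rw [← rename_finRotate_sub_swap hc]
    exact map_dvd _ hd
  have m01 : X 0 - X 1 ∣ f - rename (Equiv.swap (0 : Fin 3) 1) f := by
    refine dvd_algHom_sub (AlgHom.id F3 S3) _ _ (fun j => ?_) f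
    fin_cases j
    · simp
    · simpa using (dvd_sub_comm.1 dvd_rfl)
    · simp [h2]
  have p01 : X 0 + X 1 ∣ f - rename (Equiv.swap (0 : Fin 3) 1) f := by
    have hf : signChange 0 (signChange 1 f) = f := by
      rw [hs 1 0, signChange_signChange]
    have := dvd_algHom_sub (AlgHom.id F3 S3)
      ((rename (Equiv.swap (0 : Fin 3) 1)).comp ((signChange 0).comp (signChange 1)))
      (X 0 + X 1) (fun j => ?_) f
    · simpa [hf] using this
    · fin_cases j
      · simp [signChange_X]
      · simpa [signChange_X] using (add_comm (X 0) (X 1) : (X 0 + X 1 : S3) = _).dvd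
      · simp [signChange_X, h2]
  have m12 := hrot _ m01
  have p12 := hrot _ p01
  have m20 := hrot _ m12
  have p20 := hrot _ p12
  simp only [map_sub, map_add, rename_X, finRotate_apply, Fin.isValue, zero_add,
    Fin.reduceAdd] at m12 p12 m20 p20
  rw [bP_sub_rename_swap, neg_dvd]
  refine mul_dvd_of_prime (prime_X_add_X (by decide)) (not_dvd_of_eval ![1, 0, -1] ?_ ?_)
    (mul_dvd_of_prime (prime_X_sub_X (by decide)) (not_dvd_of_eval ![1, 0, 1] ?_ ?_)
    (mul_dvd_of_prime (prime_X_add_X (by decide)) (not_dvd_of_eval ![0, 1, -1] ?_ ?_)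
    (mul_dvd_of_prime (prime_X_sub_X (by decide)) (not_dvd_of_eval ![0, 1, 1] ?_ ?_)
    (mul_dvd_of_prime (prime_X_add_X (by decide)) (not_dvd_of_eval ![1, -1, 0] ?_ ?_)
    m01 p01) m12) p12) m20) p20 <;>
  · simp only [map_mul, map_add, map_sub, eval_X]
    decide

/-- Polynomials invariant under rotation and even sign changes lie in `A + A b`. -/
lemma exists_Phi2_eq {f : S3} (hs : ∀ i j, signChange i f = signChange j f)
    (hc : rename (finRotate 3) f = f) : ∃ pq, Phi2 pq = f := by
  have swap_swap : ∀ g : S3, rename (Equiv.swap (0 : Fin 3) 1)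
      (rename (Equiv.swap (0 : Fin 3) 1) g) = g := fun g => by
    rw [rename_rename, ← Equiv.Perm.coe_mul, Equiv.swap_mul_self]
    simp
  obtain ⟨h, hh⟩ := bP_sub_rename_swap_dvd hs hc
  have hbs : ∀ i, signChange i (bP - rename (Equiv.swap (0 : Fin 3) 1) bP) =
      bP - rename (Equiv.swap (0 : Fin 3) 1) bP := fun i => by
    have := rename_signChange (Equiv.swap (0 : Fin 3) 1) (Equiv.swap (0 : Fin 3) 1 i) bP
    rw [signChange_bP, Equiv.swap_apply_self] at this
    rw [map_sub, signChange_bP, ← this]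
  have hfs : ∀ i, signChange i (f - rename (Equiv.swap (0 : Fin 3) 1) f) =
      signChange i f - rename (Equiv.swap (0 : Fin 3) 1) (signChange 0 f) := fun i => by
    rw [map_sub, hs 0 (Equiv.swap (0 : Fin 3) 1 i), rename_signChange, Equiv.swap_apply_self]
  have h_sign : ∀ i j, signChange i h = signChange j h := fun i j => by
    apply mul_left_cancel₀ bP_sub_rename_swap_ne_zero
    conv_lhs => rw [← hbs i, ← map_mul, ← hh, hfs, hs i j]
    conv_rhs => rw [← hbs j, ← map_mul, ← hh, hfs]
  have h_rot : rename (finRotate 3) h = h := by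
    apply mul_left_cancel₀ bP_sub_rename_swap_ne_zero
    rw [← hh]
    conv_lhs => rw [← rename_finRotate_sub_swap rename_finRotate_bP]
    rw [← map_mul, ← hh, rename_finRotate_sub_swap hc]
  have h_swap : rename (Equiv.swap (0 : Fin 3) 1) h = h := by
    apply mul_left_cancel₀ bP_sub_rename_swap_ne_zero
    have := congrArg (rename (Equiv.swap (0 : Fin 3) 1)) hh
    rw [map_mul, map_sub, map_sub, swap_swap, swap_swap] at this
    linear_combination hh + this
  obtain ⟨q, hq⟩ := mem_range_of_symmetric h_sign (rename_eq_of_generators h_rot h_swap)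
  have hp : f - h * bP ∈ (aeval av : S3 →ₐ[F3] S3).range := by
    refine mem_range_of_symmetric (fun i j => ?_) (rename_eq_of_generators ?_ ?_)
    · simp only [map_sub, map_mul, signChange_bP, hs i j, h_sign i j]
    · rw [map_sub, map_mul, hc, h_rot, rename_finRotate_bP]
    · rw [map_sub, map_mul, h_swap]
      linear_combination -hh
  obtain ⟨p, hp⟩ := hp
  refine ⟨(p, q), ?_⟩
  change aeval av p = _ at hp
  change aeval av q = _ at hq
  rw [Phi2, hp, hq, sub_add_cancel]

/-- The unipotent element `t`. -/
def unipotent : G3 := ⟨!![1, 1; 0, 1], by decide⟩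

/-- The element `i` of order four. -/
def orderFour : G3 := ⟨!![0, 1; -1, 0], by decide⟩

lemma actS_unipotent (f : S3) : actS unipotent f = rename (finRotate 3) f := by
  have h : rep unipotent = !![0, 1, 0; 0, 0, 1; 1, 0, 0] := by decide
  have : actS unipotent = rename (finRotate 3) := by
    ext1 j
    fin_cases j <;> simp [actS, h, Fin.sum_univ_three]
  rw [this]

lemma actS_orderFour (f : S3) : actS orderFour f = signChange 1 (signChange 2 f) := by
  have h : rep orderFour = !![1, 0, 0; 0, -1, 0; 0, 0, -1] := by decide
  have : actS orderFour = (signChange 1).comp (signChange 2) := by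
    ext1 j
    fin_cases j <;> simp [actS, h, Fin.sum_univ_three, signChange_X]
  rw [this, AlgHom.comp_apply]

lemma signChange_eq_of_invariant {f : S3} (hf : ∀ g : G3, actS g f = f) (i j : Fin 3) :
    signChange i f = signChange j f := by
  have hc : rename (finRotate 3) f = f := by rw [← actS_unipotent, hf]
  have h12 : signChange 2 f = signChange 1 f := by
    have := congrArg (signChange 1) (hf orderFour)
    rwa [actS_orderFour, signChange_signChange] at this
  have h20 : signChange 0 f = signChange 2 f := by
    have := congrArg (rename (finRotate 3)) h12
    rwa [rename_signChange, rename_signChange, hc] at this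
  have h : ∀ k, signChange k f = signChange 0 f := by
    intro k
    fin_cases k
    exacts [rfl, (h20.trans h12).symm, h20.symm]
  rw [h i, h j]

/-- Each group element acts by a rotation followed by an even sign change. -/
lemma rep_eq (g : G3) : ∃ k : Fin 3, ∃ e₀ e₁ : F3, (e₀ = 1 ∨ e₀ = -1) ∧ (e₁ = 1 ∨ e₁ = -1) ∧
    rep g = Matrix.of fun s r => if r = s + k then ![e₀, e₁, e₀ * e₁] s else 0 := by
  have key : ∀ a b c d : F3, a * d - b * c = 1 → ∃ k : Fin 3, ∃ e₀ e₁ : F3,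
      (e₀ = 1 ∨ e₀ = -1) ∧ (e₁ = 1 ∨ e₁ = -1) ∧ ∀ s r,
      coordM s (!![d, -b; -c, a] * V r * !![a, b; c, d]) =
        if r = s + k then ![e₀, e₁, e₀ * e₁] s else 0 := by decide
  have hdet := g.2
  rw [Matrix.det_fin_two] at hdet
  obtain ⟨k, e₀, e₁, h₀, h₁, h⟩ := key _ _ _ _ hdet
  refine ⟨k, e₀, e₁, h₀, h₁, ?_⟩
  ext s r
  rw [rep, Matrix.of_apply, Matrix.of_apply, ← h, Matrix.SpecialLinearGroup.coe_inv,
    Matrix.adjugate_fin_two, ← Matrix.eta_fin_two]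

lemma actS_generators (g : G3) :
    actS g a1 = a1 ∧ actS g a2 = a2 ∧ actS g a3 = a3 ∧ actS g bP = bP := by
  obtain ⟨k, e₀, e₁, h₀, h₁, h⟩ := rep_eq g
  have hX : ∀ s, actS g (X s) = C (![e₀, e₁, e₀ * e₁] s) * X (s + k) := fun s => by
    simp [actS, h, smul_eq_C_mul]
  simp only [a1, a2, a3, bP, map_add, map_mul, map_pow, hX]
  rcases h₀ with rfl | rfl <;> rcases h₁ with rfl | rfl <;> fin_cases k <;>
    refine ⟨?_, ?_, ?_, ?_⟩ <;> simp <;> ring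

lemma actS_Phi2 (g : G3) (pq : S3 × S3) : actS g (Phi2 pq) = Phi2 pq := by
  obtain ⟨h₁, h₂, h₃, hb⟩ := actS_generators g
  have h : (actS g).comp (aeval av) = aeval av := by
    ext1 i
    fin_cases i <;> simp [av, h₁, h₂, h₃]
  rw [Phi2, map_add, map_mul, hb, ← AlgHom.comp_apply, ← AlgHom.comp_apply, h]

lemma algebraicIndependent_av : AlgebraicIndependent F3 av := by
  have ha : ∀ i, av i ∈ Algebra.adjoin F3 (Set.range av) := fun i =>
    Algebra.subset_adjoin (Set.mem_range_self i)
  have hX : ∀ i : Fin 3, IsIntegral (Algebra.adjoin F3 (Set.range av)) (X i : S3) := by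
    intro i
    let c : Fin 3 → Algebra.adjoin F3 (Set.range av) := fun i => ⟨av i, ha i⟩
    refine ⟨Polynomial.X ^ 6 - Polynomial.C (c 0) * Polynomial.X ^ 4 +
      Polynomial.C (c 2 - c 0 ^ 2) * Polynomial.X ^ 2 - Polynomial.C (c 1 ^ 2),
      by monicity!, ?_⟩
    have hc : ∀ i, algebraMap (Algebra.adjoin F3 (Set.range av)) S3 (c i) = av i := fun i => rfl
    simp only [Polynomial.eval₂_sub, Polynomial.eval₂_add, Polynomial.eval₂_mul,
      Polynomial.eval₂_pow, Polynomial.eval₂_X, Polynomial.eval₂_C, map_sub, map_pow, hc]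
    fin_cases i <;> simp [av, a1, a2, a3]
    · linear_combination
        -((X 0 ^ 2 * X 1 ^ 2 + X 0 ^ 2 * X 2 ^ 2 + X 1 ^ 2 * X 2 ^ 2) * X 0 ^ 2) * three_eq_zero
    · linear_combination
        -((X 0 ^ 2 * X 1 ^ 2 + X 0 ^ 2 * X 2 ^ 2 + X 1 ^ 2 * X 2 ^ 2) * X 1 ^ 2) * three_eq_zero
    · linear_combination
        -((X 0 ^ 2 * X 1 ^ 2 + X 0 ^ 2 * X 2 ^ 2 + X 1 ^ 2 * X 2 ^ 2) * X 2 ^ 2) * three_eq_zero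
  have : Algebra.IsIntegral (Algebra.adjoin F3 (Set.range av)) S3 := ⟨fun f => by
    induction f using MvPolynomial.induction_on with
    | C c => exact (isIntegral_algebraMap (R := F3) (x := c)).tower_top
    | add p q hp hq => exact hp.add hq
    | mul_X p i hp => exact hp.mul (hX i)⟩
  refine (Algebra.IsAlgebraic.isTranscendenceBasis_of_le_trdeg_of_finite F3 av ?_).1
  rw [MvPolynomial.trdeg_of_isDomain]
  simp

lemma Phi2_injective : Function.Injective Phi2 := by
  rintro ⟨p, q⟩ ⟨p', q'⟩ h
  have hinj : Function.Injective (aeval av : S3 →ₐ[F3] S3) := algebraicIndependent_av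
  have hσ : (rename (Equiv.swap (0 : Fin 3) 1)).comp (aeval av) = (aeval av : S3 →ₐ[F3] S3) := by
    have h2 : Equiv.swap (0 : Fin 3) 1 2 = 2 := by decide
    ext1 i
    fin_cases i <;> simp [av, a1, a2, a3, h2] <;> ring
  have hσ' : ∀ r : S3, rename (Equiv.swap (0 : Fin 3) 1) (aeval av r) = aeval av r :=
    fun r => DFunLike.congr_fun hσ r
  simp only [Phi2] at h
  have h' := congrArg (rename (Equiv.swap (0 : Fin 3) 1)) h
  simp only [map_add, map_mul, hσ'] at h'
  have hq : aeval av q = aeval av q' := by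
    apply mul_right_cancel₀ bP_sub_rename_swap_ne_zero
    linear_combination h - h'
  rw [hq, add_left_inj] at h
  rw [hinj h, hinj hq]

/-- The map `(p, q) ↦ p(a₁,a₂,a₃) + q(a₁,a₂,a₃)·b` is injective with image exactly the
invariant ring `S^G`; equivalently, `S^G` is a free module of rank 2 over
`A = 𝔽₃[a₁,a₂,a₃]` with basis `{1, b}`. -/
theorem stmt2 :
    Function.Injective Phi2 ∧
    Set.range Phi2 = {f : S3 | ∀ g : G3, actS g f = f} := by
  refine ⟨Phi2_injective, Set.Subset.antisymm ?_ fun f hf => ?_⟩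
  · rintro _ ⟨pq, rfl⟩ g
    exact actS_Phi2 g pq
  · exact exists_Phi2_eq (signChange_eq_of_invariant hf) (by rw [← actS_unipotent, hf])
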